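/- Let d ≥ 2, let 𝕊^d be the unit sphere in ℝ^{d+1} with the Euclidean metric, and let γ_d := Γ((d+1)/2)/(Γ(d/2)Γ(1/2)). Then the N-point best-packing distance of 𝕊^d satisfies δ_N(𝕊^d) ≥ (d/γ_d)^{1/d} N^{−1/d} for all N ≥ 2. -/

import Mathlib

open Metric MeasureTheory Filter
open scoped ENNReal NNReal

noncomputable section

variable {A : Type*} [MetricSpace A]

/-- The separation distance `δ(ω_N)` of a configuration of `N` points. -/
def sepDist {N : ℕ} (x : Fin N → A) : ℝ :=
  sInf {d : ℝ | ∃ i j : Fin N, i ≠ j ∧ d = dist (x i) (x j)}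

/-- The mesh norm (covering radius) `ρ(ω_N, K)` of a configuration with respect to `K`. -/
def meshNorm {N : ℕ} (x : Fin N → A) (K : Set A) : ℝ :=
  sSup {d : ℝ | ∃ y ∈ K, d = ⨅ i : Fin N, dist y (x i)}

/-- The weighted Riesz `(s,w)`-energy of a configuration. -/
def rieszEnergy {N : ℕ} (s : ℝ) (w : A → A → ℝ) (x : Fin N → A) : ℝ :=
  ∑ i : Fin N, ∑ j : Fin N, if i = j then 0 else w (x i) (x j) / dist (x i) (x j) ^ s

/-- `x` is an `N`-point `(s,w)`-energy minimizing configuration on `K`. -/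
def IsEnergyMinimizer {N : ℕ} (s : ℝ) (w : A → A → ℝ) (K : Set A) (x : Fin N → A) : Prop :=
  Function.Injective x ∧ (∀ i, x i ∈ K) ∧
    ∀ y : Fin N → A, Function.Injective y → (∀ i, y i ∈ K) →
      rieszEnergy s w x ≤ rieszEnergy s w y

/-- The `N`-point best-packing distance `δ_N(K)`. -/
def bestPackingDist (K : Set A) (N : ℕ) : ℝ :=
  sSup {d : ℝ | ∃ x : Fin N → A, Function.Injective x ∧ (∀ i, x i ∈ K) ∧ d = sepDist x}

/-- The `N`-point mesh norm `ρ_N(K)`. -/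
def meshNormN (K : Set A) (N : ℕ) : ℝ :=
  sInf {d : ℝ | ∃ x : Fin N → A, Function.Injective x ∧ (∀ i, x i ∈ K) ∧ d = meshNorm x K}

/-- The minimal `N`-point `(s,w)`-energy `𝓔_s^w(N,K)`. -/
def minEnergy (s : ℝ) (w : A → A → ℝ) (K : Set A) (N : ℕ) : ℝ :=
  sInf {E : ℝ | ∃ x : Fin N → A, Function.Injective x ∧ (∀ i, x i ∈ K) ∧ E = rieszEnergy s w x}

/-- `μ` is upper `α`-regular with constant `C₀`. -/
def IsUpperRegular [MeasurableSpace A] (μ : Measure A) (α C₀ : ℝ) : Prop :=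
  ∀ (x : A) (r : ℝ), 0 < r → r ≤ diam (Set.univ : Set A) →
    μ (closedBall x r) ≤ ENNReal.ofReal (C₀ * r ^ α)

/-- `μ` is lower `α`-regular with constant `c₀`. -/
def IsLowerRegular [MeasurableSpace A] (μ : Measure A) (α c₀ : ℝ) : Prop :=
  ∀ (x : A) (r : ℝ), 0 < r → r ≤ diam (Set.univ : Set A) →
    ENNReal.ofReal (c₀⁻¹ * r ^ α) ≤ μ (closedBall x r)

/-- `w` is an SLP weight on `K`: symmetric, lower semi-continuous on `K × K`,
nonnegative, and positive on the diagonal. -/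
def IsSLPWeight (w : A → A → ℝ) (K : Set A) : Prop :=
  (∀ x ∈ K, ∀ y ∈ K, 0 ≤ w x y) ∧
  (∀ x ∈ K, ∀ y ∈ K, w x y = w y x) ∧
  LowerSemicontinuousOn (fun p : A × A => w p.1 p.2) (K ×ˢ K) ∧
  (∀ x ∈ K, 0 < w x x)

/-- The constant `γ_d = Γ((d+1)/2)/(Γ(d/2)Γ(1/2))`. -/
def gammaD (d : ℕ) : ℝ :=
  Real.Gamma (((d : ℝ) + 1) / 2) / (Real.Gamma ((d : ℝ) / 2) * Real.Gamma (1 / 2))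

open Module Set

/-!
In dimension `d ≥ 2` the surface measure of a spherical cap of chordal radius `r` is at most the
volume of a flat ball of radius `r` in the tangent hyperplane. Indeed, in spherical coordinates the
cap has measure proportional to `∫ sin φ ^ (d - 1) dφ`; substituting the chord `q = 2 sin (φ / 2)`
gives `dq = cos (φ / 2) dφ` and `sin φ ^ (d - 1) = (cos (φ / 2) * q) ^ (d - 1)`, which is at most
`cos (φ / 2) * q ^ (d - 1)`, and `∫ q ^ (d - 1) dq` is the radial integral of the flat ball.
So a cover of the sphere by caps of radius `r` has at least as many members as the ratio of the
two measures, which is `N` exactly when `r ^ d = d / (γ_d N)`. A maximal `r`-separated set is such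
a cover.
-/

theorem measure_div_le_coveringNumber {X : Type*} [PseudoEMetricSpace X] [MeasurableSpace X]
    (μ : Measure X) {K : Set X} {r : ℝ≥0} {m : ℝ≥0∞} (h : ∀ x ∈ K, μ (closedEBall x r) ≤ m) :
    μ K / m ≤ (coveringNumber r K : ℝ≥0∞) := by
  by_cases! htop : coveringNumber r K = ⊤
  · simp [htop]
  obtain ⟨C, hCK, hCfin, hcover, hcard⟩ := exists_set_encard_eq_coveringNumber htop
  refine ENNReal.div_le_of_le_mul ?_
  calc
    μ K ≤ μ (⋃ x ∈ hCfin.toFinset, closedEBall x r) := measure_mono <| by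
      simpa using isCover_iff_subset_iUnion_closedEBall.1 hcover
    _ ≤ ∑ x ∈ hCfin.toFinset, μ (closedEBall x r) := measure_biUnion_finset_le _ _
    _ ≤ ∑ _x ∈ hCfin.toFinset, m := Finset.sum_le_sum fun x hx => h x (hCK (by simpa using hx))
    _ = _ := by simp [← hcard, hCfin.encard_eq_coe_toFinset_card]

theorem exists_isSeparated_encard_eq_of_le_packingNumber {X : Type*} [PseudoEMetricSpace X]
    {K : Set X} {r : ℝ≥0} {N : ℕ} (hN : (N : ℕ∞) ≤ packingNumber r K) :
    ∃ C ⊆ K, IsSeparated r C ∧ C.encard = N := by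
  cases N with
  | zero => exact ⟨∅, empty_subset _, .empty, by simp⟩
  | succ k =>
    have hk : (k : ℕ∞) < packingNumber r K := lt_of_lt_of_le (by norm_cast; omega) hN
    simp only [packingNumber, lt_iSup_iff] at hk
    obtain ⟨C, hCK, hC, hkC⟩ := hk
    obtain ⟨D, hDC, hD⟩ := exists_subset_encard_eq (s := C) (k := (k + 1 : ℕ)) (by
      push_cast
      exact Order.add_one_le_of_lt hkC)
    exact ⟨D, hDC.trans hCK, hC.mono hDC, hD⟩

theorem le_sepDist {N : ℕ} (hN : 2 ≤ N) {x : Fin N → A} {r : ℝ}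
    (h : Pairwise fun i j => r ≤ dist (x i) (x j)) : r ≤ sepDist x := by
  refine le_csInf ⟨_, ⟨0, by omega⟩, ⟨1, by omega⟩, by simp, rfl⟩ ?_
  rintro _ ⟨i, j, hij, rfl⟩
  exact h hij

theorem sepDist_le_dist {N : ℕ} (x : Fin N → A) {i j : Fin N} (hij : i ≠ j) :
    sepDist x ≤ dist (x i) (x j) := by
  refine csInf_le ⟨0, ?_⟩ ⟨i, j, hij, rfl⟩
  rintro _ ⟨i, j, -, rfl⟩
  exact dist_nonneg

theorem sepDist_le_bestPackingDist {K : Set A} (hK : Bornology.IsBounded K) {N : ℕ} (hN : 2 ≤ N)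
    {x : Fin N → A} (hx : Function.Injective x) (hxK : ∀ i, x i ∈ K) :
    sepDist x ≤ bestPackingDist K N := by
  refine le_csSup ⟨diam K, ?_⟩ ⟨x, hx, hxK, rfl⟩
  rintro _ ⟨z, -, hz, rfl⟩
  exact (sepDist_le_dist z (i := ⟨0, by omega⟩) (j := ⟨1, by omega⟩) (by simp)).trans
    (dist_le_diam_of_mem hK (hz _) (hz _))

theorem le_bestPackingDist_of_le_packingNumber {K : Set A} (hK : Bornology.IsBounded K) {N : ℕ}
    (hN : 2 ≤ N) {r : ℝ≥0} (h : (N : ℕ∞) ≤ packingNumber r K) : r ≤ bestPackingDist K N := by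
  obtain ⟨C, hCK, hsep, hcard⟩ := exists_isSeparated_encard_eq_of_le_packingNumber h
  have : Finite C := finite_of_encard_eq_coe hcard
  have e : C ≃ Fin N := Finite.equivFinOfCardEq (by simp [Nat.card_coe_set_eq, ncard, hcard])
  have hinj : Function.Injective fun i => (e.symm i : A) :=
    Subtype.val_injective.comp e.symm.injective
  refine (le_sepDist hN fun i j hij => ?_).trans
    (sepDist_le_bestPackingDist hK hN hinj fun i => hCK (e.symm i).2)
  have hlt : (r : ℝ≥0∞) < edist (e.symm i : A) (e.symm j) :=
    hsep (e.symm i).2 (e.symm j).2 (hinj.ne hij)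
  rw [edist_nndist, ENNReal.coe_lt_coe] at hlt
  exact_mod_cast hlt.le

theorem gammaD_pos {d : ℕ} (hd : d ≠ 0) : 0 < gammaD d :=
  div_pos (Real.Gamma_pos_of_pos (by positivity))
    (mul_pos (Real.Gamma_pos_of_pos (by positivity)) (Real.Gamma_pos_of_pos (by positivity)))

/-- The volume of the unit ball in dimension `d`. -/
def unitBallVol (d : ℕ) : ℝ :=
  √Real.pi ^ d / Real.Gamma (d / 2 + 1)

theorem unitBallVol_pos (d : ℕ) : 0 < unitBallVol d :=
  div_pos (pow_pos (Real.sqrt_pos.2 Real.pi_pos) d) (Real.Gamma_pos_of_pos (by positivity))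

theorem succ_mul_unitBallVol_succ {d : ℕ} (hd : d ≠ 0) :
    (d + 1) * unitBallVol (d + 1) = d / gammaD d * unitBallVol d := by
  have : 0 < Real.Gamma (((d : ℝ) + 1) / 2) := Real.Gamma_pos_of_pos (by positivity)
  have : 0 < Real.Gamma ((d : ℝ) / 2) := Real.Gamma_pos_of_pos (by positivity)
  have := Real.pi_pos
  rw [unitBallVol, unitBallVol, gammaD, Real.Gamma_one_half_eq,
    Real.Gamma_add_one (by positivity), Real.Gamma_add_one (by positivity)]
  push_cast
  field_simp
  ring

theorem volumeIoiPow_preimage_val (n : ℕ) {S : Set ℝ} (hS : MeasurableSet S) :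
    Measure.volumeIoiPow n (Subtype.val ⁻¹' S) =
      ∫⁻ s in S ∩ Ioi 0, ENNReal.ofReal (s ^ n) := by
  rw [Measure.volumeIoiPow, withDensity_apply _ (measurable_subtype_coe hS),
    setLIntegral_subtype measurableSet_Ioi _ fun s : ℝ => ENNReal.ofReal (s ^ n),
    Subtype.image_preimage_coe, inter_comm]

theorem lintegral_pow_Ioo_zero_one (n : ℕ) :
    ∫⁻ s in Ioo (0 : ℝ) 1, ENNReal.ofReal (s ^ n) = (n + 1 : ℝ≥0∞)⁻¹ := by
  have h := Measure.volumeIoiPow_apply_Iio n ⟨1, mem_Ioi.2 one_pos⟩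
  have hI : (Iio ⟨1, mem_Ioi.2 one_pos⟩ : Set (Ioi (0 : ℝ))) = Subtype.val ⁻¹' Iio 1 := rfl
  rw [hI, volumeIoiPow_preimage_val n measurableSet_Iio, Iio_inter_Ioi, one_pow, one_div,
    ENNReal.ofReal_inv_of_pos (by positivity)] at h
  exact_mod_cast h

section Radial

variable {E : Type*} [NormedAddCommGroup E] [NormedSpace ℝ E] [MeasurableSpace E] [BorelSpace E]
  [FiniteDimensional ℝ E] [Nontrivial E] (ν : Measure E) [ν.IsAddHaarMeasure]

theorem addHaar_norm_preimage {S : Set ℝ} (hS : MeasurableSet S) :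
    ν (norm ⁻¹' S) = finrank ℝ E * ν (ball 0 1) *
      ∫⁻ s in S ∩ Ioi 0, ENNReal.ofReal (s ^ (finrank ℝ E - 1)) := by
  have hS' : MeasurableSet
      ((univ : Set (sphere (0 : E) 1)) ×ˢ (Subtype.val ⁻¹' S : Set (Ioi (0 : ℝ)))) :=
    MeasurableSet.univ.prod (measurable_subtype_coe hS)
  calc
    ν (norm ⁻¹' S) = ν.restrict {0}ᶜ (norm ⁻¹' S) := by rw [restrict_compl_singleton]
    _ = ν.comap ((↑) : ({0}ᶜ : Set E) → E) (Subtype.val ⁻¹' (norm ⁻¹' S)) := by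
      rw [comap_subtype_coe_apply (measurableSet_singleton 0).compl,
        Subtype.image_preimage_coe, Measure.restrict_apply (measurable_norm hS), inter_comm]
    _ = ν.toSphere.prod (.volumeIoiPow (finrank ℝ E - 1)) (univ ×ˢ (Subtype.val ⁻¹' S)) := by
      rw [← ν.measurePreserving_homeomorphUnitSphereProd.measure_preimage hS'.nullMeasurableSet]
      congr 1
      ext x
      simp
    _ = _ := by
      rw [Measure.prod_prod, ν.toSphere_apply_univ, volumeIoiPow_preimage_val _ hS]

theorem prod_addHaar_norm_preimage {α : Type*} [MeasurableSpace α] (μ : Measure α) [SFinite μ]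
    {U : Set (α × ℝ)} (hU : MeasurableSet U) :
    μ.prod ν (Prod.map id norm ⁻¹' U) = finrank ℝ E * ν (ball 0 1) *
      ∫⁻ p : α × ℝ in U ∩ univ ×ˢ Ioi (0 : ℝ),
        ENNReal.ofReal (p.2 ^ (finrank ℝ E - 1)) ∂μ.prod volume := by
  calc
    μ.prod ν (Prod.map id norm ⁻¹' U) = ∫⁻ a, ν (norm ⁻¹' (Prod.mk a ⁻¹' U)) ∂μ :=
      Measure.prod_apply (measurable_id.prodMap measurable_norm hU)
    _ = finrank ℝ E * ν (ball 0 1) * ∫⁻ a, (∫⁻ s in Prod.mk a ⁻¹' U ∩ Ioi 0,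
          ENNReal.ofReal (s ^ (finrank ℝ E - 1))) ∂μ := by
      simp_rw [addHaar_norm_preimage ν (measurable_prodMk_left hU)]
      rw [lintegral_const_mul' _ _ (by finiteness)]
    _ = _ := by
      have hU' := hU.inter (MeasurableSet.univ.prod (measurableSet_Ioi (a := (0 : ℝ))))
      rw [← lintegral_indicator hU', lintegral_prod _
        (Measurable.indicator (by fun_prop) hU').aemeasurable]
      congr! 3 with a
      have hslice : Prod.mk a ⁻¹' U ∩ Ioi 0 = Prod.mk a ⁻¹' (U ∩ univ ×ˢ Ioi 0) := by ext; simp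
      rw [hslice, ← lintegral_indicator (measurable_prodMk_left hU')]
      rfl

end Radial

/-- The points `(t, s)` of the open unit disc whose angle with the positive first axis has cosine at
least `c`; the profile of `ballSector`, with `t` the height along the axis and `s` the distance
to it. The cosine condition is multiplied out, so that the origin belongs to the sector. -/
def discSector (c : ℝ) : Set (ℝ × ℝ) :=
  {p | √(p.1 ^ 2 + p.2 ^ 2) < 1 ∧ c * √(p.1 ^ 2 + p.2 ^ 2) ≤ p.1}

theorem measurableSet_discSector (c : ℝ) : MeasurableSet (discSector c) := by
  have hnorm : MeasurableSet {p : ℝ × ℝ | √(p.1 ^ 2 + p.2 ^ 2) < 1} :=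
    measurableSet_lt (by fun_prop) (by fun_prop)
  have hangle : MeasurableSet {p : ℝ × ℝ | c * √(p.1 ^ 2 + p.2 ^ 2) ≤ p.1} :=
    measurableSet_le (by fun_prop) (by fun_prop)
  exact hnorm.inter hangle

theorem polarCoord_symm_mem_upper_discSector_iff {c ρ φ : ℝ} (hp : (ρ, φ) ∈ polarCoord.target) :
    polarCoord.symm (ρ, φ) ∈ discSector c ∩ univ ×ˢ Ioi 0 ↔
      (ρ, φ) ∈ Ioo 0 1 ×ˢ {φ ∈ Ioo 0 Real.pi | c ≤ Real.cos φ} := by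
  obtain ⟨hρ : 0 < ρ, hφ⟩ := hp
  have hsqrt : √((ρ * Real.cos φ) ^ 2 + (ρ * Real.sin φ) ^ 2) = ρ := by
    rw [← Real.sqrt_sq hρ.le]
    congr 1
    rw [Real.sqrt_sq hρ.le]
    linear_combination ρ ^ 2 * Real.cos_sq_add_sin_sq φ
  have hsin : 0 < Real.sin φ ↔ 0 < φ := by
    refine ⟨fun h => ?_, fun h => Real.sin_pos_of_pos_of_lt_pi h hφ.2⟩
    by_contra! hφ0
    exact h.not_ge (Real.sin_nonpos_of_nonpos_of_neg_pi_le hφ0 hφ.1.le)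
  simp only [discSector, polarCoord_symm_apply, mem_inter_iff, mem_ofPred_eq, hsqrt, mem_prod,
    mem_univ, mem_Ioi, mem_Ioo, mul_comm c, mul_le_mul_iff_right₀ hρ, mul_pos_iff_of_pos_left hρ,
    hsin, hρ, hφ.2]
  tauto

theorem lintegral_upper_discSector (c : ℝ) (n : ℕ) :
    ∫⁻ p in discSector c ∩ univ ×ˢ Ioi 0, ENNReal.ofReal (p.2 ^ n) =
      (n + 2 : ℝ≥0∞)⁻¹ *
        ∫⁻ φ in {φ ∈ Ioo 0 Real.pi | c ≤ Real.cos φ}, ENNReal.ofReal (Real.sin φ ^ n) := by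
  set U := discSector c ∩ univ ×ˢ Ioi 0
  set T := {φ ∈ Ioo 0 Real.pi | c ≤ Real.cos φ}
  have hU : MeasurableSet U :=
    (measurableSet_discSector c).inter (MeasurableSet.univ.prod measurableSet_Ioi)
  have hT : MeasurableSet T :=
    measurableSet_Ioo.inter (Real.continuous_cos.measurable measurableSet_Ici)
  have hsub : Ioo 0 1 ×ˢ T ⊆ polarCoord.target := fun p hp =>
    ⟨hp.1.1, by linarith [hp.2.1.1, Real.pi_pos], hp.2.1.2⟩
  calc
    _ = ∫⁻ p in polarCoord.target, (Ioo 0 1 ×ˢ T).indicator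
          (fun p => ENNReal.ofReal (p.1 ^ (n + 1)) * ENNReal.ofReal (Real.sin p.2 ^ n)) p := by
      rw [← lintegral_indicator hU, ← lintegral_comp_polarCoord_symm]
      refine setLIntegral_congr_fun polarCoord.open_target.measurableSet fun p hp => ?_
      have hiff := polarCoord_symm_mem_upper_discSector_iff (c := c) hp
      have hp1 : 0 < p.1 := hp.1
      by_cases hpT : p ∈ Ioo 0 1 ×ˢ T
      · rw [indicator_of_mem (hiff.2 hpT), indicator_of_mem hpT, polarCoord_symm_apply, smul_eq_mul,
          ← ENNReal.ofReal_mul hp1.le, ← ENNReal.ofReal_mul (by positivity)]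
        ring_nf
      · rw [indicator_of_notMem (mt hiff.1 hpT), indicator_of_notMem hpT, smul_zero]
    _ = ∫⁻ p in Ioo 0 1 ×ˢ T,
          ENNReal.ofReal (p.1 ^ (n + 1)) * ENNReal.ofReal (Real.sin p.2 ^ n) := by
      rw [setLIntegral_indicator (measurableSet_Ioo.prod hT), inter_eq_left.2 hsub]
    _ = (∫⁻ ρ in Ioo (0 : ℝ) 1, ENNReal.ofReal (ρ ^ (n + 1))) *
          ∫⁻ φ in T, ENNReal.ofReal (Real.sin φ ^ n) := by
      rw [Measure.volume_eq_prod, ← Measure.prod_restrict]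
      exact lintegral_prod_mul (f := fun ρ : ℝ => ENNReal.ofReal (ρ ^ (n + 1)))
        (g := fun φ => ENNReal.ofReal (Real.sin φ ^ n)) (by fun_prop) (by fun_prop)
    _ = _ := by
      rw [lintegral_pow_Ioo_zero_one]
      norm_num [add_assoc]

/-- The length of a chord of the unit circle subtending the angle `φ`. -/
def chord (φ : ℝ) : ℝ :=
  2 * Real.sin (φ / 2)

theorem chord_sq (φ : ℝ) : chord φ ^ 2 = 2 - 2 * Real.cos φ := by
  have h := Real.sin_sq_eq_half_sub (φ / 2)
  rw [mul_div_cancel₀ φ two_ne_zero] at h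
  rw [chord]
  linear_combination 4 * h

theorem sin_eq_cos_half_mul_chord (φ : ℝ) : Real.sin φ = Real.cos (φ / 2) * chord φ := by
  have h := Real.sin_two_mul (φ / 2)
  rw [mul_div_cancel₀ φ two_ne_zero] at h
  rw [chord]
  linear_combination h

theorem hasDerivAt_chord (φ : ℝ) : HasDerivAt chord (Real.cos (φ / 2)) φ := by
  have h := ((hasDerivAt_id φ).div_const 2).sin.const_mul 2
  exact h.congr_deriv (by simp only [id]; ring)

theorem chord_pos {φ : ℝ} (hφ : φ ∈ Ioo 0 Real.pi) : 0 < chord φ :=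
  mul_pos two_pos (Real.sin_pos_of_pos_of_lt_pi (half_pos hφ.1) (by linarith [hφ.1, hφ.2]))

theorem cos_half_nonneg {φ : ℝ} (hφ : φ ∈ Ioo 0 Real.pi) : 0 ≤ Real.cos (φ / 2) :=
  Real.cos_nonneg_of_mem_Icc ⟨by linarith [hφ.1, hφ.2], by linarith [hφ.2]⟩

theorem injOn_chord : InjOn chord (Ioo 0 Real.pi) := fun x hx y hy hxy => by
  have hhalf : x / 2 = y / 2 := Real.injOn_sin ⟨by linarith [hx.1, hx.2], by linarith [hx.2]⟩
    ⟨by linarith [hy.1, hy.2], by linarith [hy.2]⟩ (mul_left_cancel₀ two_ne_zero hxy)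
  linarith

theorem sin_pow_le_cos_half_mul_chord_pow {n : ℕ} (hn : n ≠ 0) {φ : ℝ} (hφ : φ ∈ Ioo 0 Real.pi) :
    Real.sin φ ^ n ≤ Real.cos (φ / 2) * chord φ ^ n := by
  rw [sin_eq_cos_half_mul_chord, mul_pow]
  have := (chord_pos hφ).le
  gcongr
  exact pow_le_of_le_one (cos_half_nonneg hφ) (Real.cos_le_one _) hn

theorem lintegral_sin_pow_le {n : ℕ} (hn : n ≠ 0) {r : ℝ} (hr : 0 ≤ r) :
    ∫⁻ φ in {φ ∈ Ioo 0 Real.pi | 1 - r ^ 2 / 2 ≤ Real.cos φ}, ENNReal.ofReal (Real.sin φ ^ n) ≤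
      ∫⁻ s in Iic r ∩ Ioi 0, ENNReal.ofReal (s ^ n) := by
  set T := {φ ∈ Ioo 0 Real.pi | 1 - r ^ 2 / 2 ≤ Real.cos φ}
  have hT : MeasurableSet T :=
    measurableSet_Ioo.inter (Real.continuous_cos.measurable measurableSet_Ici)
  have himage : chord '' T ⊆ Iic r ∩ Ioi 0 := by
    rintro _ ⟨φ, hφ, rfl⟩
    exact ⟨le_of_sq_le_sq (by linarith [chord_sq φ, hφ.2]) hr, chord_pos hφ.1⟩
  calc
    _ ≤ ∫⁻ φ in T, ENNReal.ofReal |Real.cos (φ / 2)| * ENNReal.ofReal (chord φ ^ n) := by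
      refine setLIntegral_mono' hT fun φ hφ => ?_
      rw [← ENNReal.ofReal_mul (abs_nonneg _), abs_of_nonneg (cos_half_nonneg hφ.1)]
      exact ENNReal.ofReal_le_ofReal (sin_pow_le_cos_half_mul_chord_pow hn hφ.1)
    _ = ∫⁻ s in chord '' T, ENNReal.ofReal (s ^ n) :=
      (lintegral_image_eq_lintegral_abs_deriv_mul hT
        (fun φ _ => (hasDerivAt_chord φ).hasDerivWithinAt) (injOn_chord.mono fun _ hφ => hφ.1)
        fun s => ENNReal.ofReal (s ^ n)).symm
    _ ≤ _ := lintegral_mono_set himage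

section BallSector

variable {E : Type*} [NormedAddCommGroup E] [InnerProductSpace ℝ E]

theorem norm_smul_add_orthogonal {e : E} (he : ‖e‖ = 1) (t : ℝ) (y : (ℝ ∙ e)ᗮ) :
    ‖t • e + (y : E)‖ = √(t ^ 2 + ‖y‖ ^ 2) := by
  have hy : inner ℝ e (y : E) = 0 := Submodule.mem_orthogonal_singleton_iff_inner_right.1 y.2
  rw [eq_comm, Real.sqrt_eq_iff_mul_self_eq (by positivity) (norm_nonneg _),
    norm_add_mul_self_real, inner_smul_left, hy, norm_smul, he]
  simp [sq]

theorem inner_smul_add_orthogonal {e : E} (he : ‖e‖ = 1) (t : ℝ) (y : (ℝ ∙ e)ᗮ) :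
    inner ℝ e (t • e + (y : E)) = t := by
  have hy : inner ℝ e (y : E) = 0 := Submodule.mem_orthogonal_singleton_iff_inner_right.1 y.2
  rw [inner_add_right, hy, inner_smul_right, real_inner_self_eq_norm_sq, he]
  simp

/-- The sector of the open unit ball that consists of the points whose angle with the axis `e`
(a unit vector) has cosine at least `c`, with that condition multiplied out as in `discSector`. -/
def ballSector (e : E) (c : ℝ) : Set E :=
  {x | ‖x‖ < 1 ∧ c * ‖x‖ ≤ inner ℝ e x}

theorem measurableSet_ballSector [MeasurableSpace E] [BorelSpace E] (e : E) (c : ℝ) :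
    MeasurableSet (ballSector e c) :=
  (isOpen_lt continuous_norm continuous_const).measurableSet.inter
    (isClosed_le (continuous_norm.const_mul c) (innerSL ℝ e).continuous).measurableSet

theorem smul_mem_ballSector {u v : sphere (0 : E) 1} {r t : ℝ} (huv : dist v u ≤ r)
    (ht : t ∈ Ioo (0 : ℝ) 1) : t • (v : E) ∈ ballSector (u : E) (1 - r ^ 2 / 2) := by
  have hsq : dist v u ^ 2 ≤ r ^ 2 := by gcongr
  rw [Subtype.dist_eq, dist_eq_norm, norm_sub_sq_real, norm_eq_of_mem_sphere,
    norm_eq_of_mem_sphere, real_inner_comm] at hsq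
  have hnorm : ‖t • (v : E)‖ = t := by simp [norm_smul, ht.1.le]
  refine ⟨hnorm.trans_lt ht.2, ?_⟩
  rw [hnorm, inner_smul_right, mul_comm]
  exact mul_le_mul_of_nonneg_left (by linarith) ht.1.le

variable [FiniteDimensional ℝ E] [MeasurableSpace E] [BorelSpace E]

theorem measurePreserving_smul_add_orthogonal {e : E} (he : ‖e‖ = 1) :
    MeasurePreserving fun p : ℝ × (ℝ ∙ e)ᗮ => p.1 • e + (p.2 : E) :=
  (ℝ ∙ e).orthogonalDecomposition.symm.measurePreserving.comp
    ((WithLp.volume_preserving_toLp (ℝ ∙ e) (ℝ ∙ e)ᗮ).comp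
      ((LinearIsometryEquiv.toSpanUnitSingleton e he).measurePreserving.prod (.id volume)))

theorem volume_ballSector {n : ℕ} (hE : finrank ℝ E = n + 2) {e : E} (he : ‖e‖ = 1) (c : ℝ) :
    volume (ballSector e c) = (n + 1 : ℕ) * volume (ball (0 : (ℝ ∙ e)ᗮ) 1) *
      ((n + 2 : ℝ≥0∞)⁻¹ *
        ∫⁻ φ in {φ ∈ Ioo 0 Real.pi | c ≤ Real.cos φ}, ENNReal.ofReal (Real.sin φ ^ n)) := by
  have : Fact (finrank ℝ E = n + 1 + 1) := ⟨hE⟩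
  have he0 : e ≠ 0 := by rintro rfl; simp at he
  have hF : finrank ℝ (ℝ ∙ e)ᗮ = n + 1 := Submodule.finrank_orthogonal_span_singleton he0
  have : Nontrivial (ℝ ∙ e)ᗮ := nontrivial_of_finrank_pos (R := ℝ) (by omega)
  have hpre : (fun p : ℝ × (ℝ ∙ e)ᗮ => p.1 • e + (p.2 : E)) ⁻¹' ballSector e c =
      Prod.map id norm ⁻¹' discSector c := by
    ext p
    simp [ballSector, discSector, norm_smul_add_orthogonal he, inner_smul_add_orthogonal he]
  rw [← (measurePreserving_smul_add_orthogonal he).measure_preimage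
    (measurableSet_ballSector e c).nullMeasurableSet, hpre, Measure.volume_eq_prod,
    prod_addHaar_norm_preimage _ _ (measurableSet_discSector c), hF, Nat.add_sub_cancel,
    ← Measure.volume_eq_prod, lintegral_upper_discSector]

open scoped Pointwise in
theorem toSphere_closedBall_le (hE : 3 ≤ finrank ℝ E) (u : sphere (0 : E) 1) {r : ℝ}
    (hr : 0 ≤ r) :
    (volume : Measure E).toSphere (closedBall u r) ≤
      volume (closedBall (0 : (ℝ ∙ (u : E))ᗮ) r) := by
  obtain ⟨n, hn⟩ : ∃ n, finrank ℝ E = n + 2 := ⟨finrank ℝ E - 2, by omega⟩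
  have hn0 : n ≠ 0 := by omega
  have : Fact (finrank ℝ E = n + 1 + 1) := ⟨hn⟩
  have hF : finrank ℝ (ℝ ∙ (u : E))ᗮ = n + 1 :=
    Submodule.finrank_orthogonal_span_singleton (ne_zero_of_mem_unit_sphere u)
  have : Nontrivial (ℝ ∙ (u : E))ᗮ := nontrivial_of_finrank_pos (R := ℝ) (by omega)
  have hcone : Ioo (0 : ℝ) 1 • (Subtype.val '' closedBall u r) ⊆
      ballSector (u : E) (1 - r ^ 2 / 2) := by
    rintro _ ⟨t, ht, _, ⟨v, hv, rfl⟩, rfl⟩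
    exact smul_mem_ballSector hv ht
  have hball : closedBall (0 : (ℝ ∙ (u : E))ᗮ) r = norm ⁻¹' Iic r := by ext; simp
  calc
    _ = (n + 2 : ℝ≥0∞) * volume (Ioo (0 : ℝ) 1 • (Subtype.val '' closedBall u r)) := by
      rw [Measure.toSphere_apply' _ measurableSet_closedBall, hn]
      norm_cast
    _ ≤ (n + 2 : ℝ≥0∞) * volume (ballSector (u : E) (1 - r ^ 2 / 2)) := by gcongr
    _ = (n + 1 : ℕ) * volume (ball (0 : (ℝ ∙ (u : E))ᗮ) 1) *
          ∫⁻ φ in {φ ∈ Ioo 0 Real.pi | 1 - r ^ 2 / 2 ≤ Real.cos φ},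
            ENNReal.ofReal (Real.sin φ ^ n) := by
      rw [volume_ballSector hn (norm_eq_of_mem_sphere u), mul_left_comm, ← mul_assoc (n + 2 : ℝ≥0∞),
        ENNReal.mul_inv_cancel (by positivity) (by finiteness), one_mul]
    _ ≤ (n + 1 : ℕ) * volume (ball (0 : (ℝ ∙ (u : E))ᗮ) 1) *
          ∫⁻ s in Iic r ∩ Ioi 0, ENNReal.ofReal (s ^ n) := by
      grw [lintegral_sin_pow_le hn0 hr]
    _ = _ := by rw [hball, addHaar_norm_preimage _ measurableSet_Iic, hF, Nat.add_sub_cancel]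

theorem volume_toSphere_univ {d : ℕ} (hd : d ≠ 0) (hE : finrank ℝ E = d + 1) :
    (volume : Measure E).toSphere univ = ENNReal.ofReal (d / gammaD d * unitBallVol d) := by
  have : Nontrivial E := nontrivial_of_finrank_pos (R := ℝ) (by omega)
  rw [← succ_mul_unitBallVol_succ hd, Measure.toSphere_apply_univ, InnerProductSpace.volume_ball,
    hE, ENNReal.ofReal_one, one_pow, one_mul, ← unitBallVol, ENNReal.ofReal_mul (by positivity)]
  norm_cast

theorem toSphere_closedBall_le_ofReal {d : ℕ} (hd : 2 ≤ d) (hE : finrank ℝ E = d + 1)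
    (u : sphere (0 : E) 1) {r : ℝ} (hr : 0 ≤ r) :
    (volume : Measure E).toSphere (closedBall u r) ≤ ENNReal.ofReal (r ^ d * unitBallVol d) := by
  have : Fact (finrank ℝ E = d + 1) := ⟨hE⟩
  have hF : finrank ℝ (ℝ ∙ (u : E))ᗮ = d :=
    Submodule.finrank_orthogonal_span_singleton (ne_zero_of_mem_unit_sphere u)
  have : Nontrivial (ℝ ∙ (u : E))ᗮ := nontrivial_of_finrank_pos (R := ℝ) (by omega)
  refine (toSphere_closedBall_le (by omega) u hr).trans_eq ?_
  rw [InnerProductSpace.volume_closedBall, hF, ← unitBallVol, ← ENNReal.ofReal_pow hr,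
    ← ENNReal.ofReal_mul (by positivity)]

end BallSector

section Sphere

variable {E : Type*} [NormedAddCommGroup E] [InnerProductSpace ℝ E] {d : ℕ}

theorem le_coveringNumber_sphere (hd : 2 ≤ d) (hE : finrank ℝ E = d + 1) {r : ℝ≥0} (hr : r ≠ 0) :
    ENNReal.ofReal (d / gammaD d / r ^ d) ≤ (coveringNumber r (sphere (0 : E) 1) : ℝ≥0∞) := by
  have : FiniteDimensional ℝ E := .of_finrank_pos (by omega)
  borelize E
  have hV := unitBallVol_pos d
  set σ : Measure E := (volume : Measure E).toSphere.map Subtype.val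
  have hsphere : σ (sphere 0 1) = ENNReal.ofReal (d / gammaD d * unitBallVol d) := by
    rw [Measure.map_apply measurable_subtype_coe isClosed_sphere.measurableSet,
      Subtype.coe_preimage_self, volume_toSphere_univ (by omega) hE]
  have hcap : ∀ x ∈ sphere (0 : E) 1,
      σ (closedEBall x r) ≤ ENNReal.ofReal (r ^ d * unitBallVol d) := fun x hx => by
    rw [closedEBall_coe, Measure.map_apply measurable_subtype_coe measurableSet_closedBall]
    exact toSphere_closedBall_le_ofReal hd hE ⟨x, hx⟩ r.2
  calc
    _ = σ (sphere 0 1) / ENNReal.ofReal (r ^ d * unitBallVol d) := by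
      rw [hsphere, ← ENNReal.ofReal_div_of_pos (by positivity), mul_div_mul_right _ _ hV.ne']
    _ ≤ _ := measure_div_le_coveringNumber σ hcap

theorem stmt_16_general (hd : 2 ≤ d) (hE : finrank ℝ E = d + 1) {N : ℕ} (hN : 2 ≤ N) :
    ((d : ℝ) / gammaD d) ^ (1 / (d : ℝ)) * (N : ℝ) ^ (-(1 / (d : ℝ))) ≤
      bestPackingDist (sphere (0 : E) 1) N := by
  have hγ := gammaD_pos (d := d) (by omega)
  have hd0 : (0 : ℝ) < d := by positivity
  set r := ((d : ℝ) / gammaD d) ^ (1 / (d : ℝ)) * (N : ℝ) ^ (-(1 / (d : ℝ)))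
  have hr : 0 < r := by positivity
  have hrd : r ^ d = d / gammaD d / N := by
    rw [mul_pow, ← Real.rpow_natCast, ← Real.rpow_natCast, ← Real.rpow_mul (by positivity),
      ← Real.rpow_mul (by positivity), neg_mul, one_div_mul_cancel hd0.ne', Real.rpow_one,
      Real.rpow_neg_one, ← div_eq_mul_inv]
  clear_value r
  lift r to ℝ≥0 using hr.le
  have hcover := le_coveringNumber_sphere hd hE (NNReal.coe_pos.1 hr).ne'
  rw [hrd, div_div_cancel₀ (by positivity), ENNReal.ofReal_natCast] at hcover
  have hpack : (N : ℕ∞) ≤ packingNumber r (sphere (0 : E) 1) :=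
    le_trans (by exact_mod_cast hcover) (coveringNumber_le_packingNumber r _)
  exact le_bestPackingDist_of_le_packingNumber isBounded_sphere hN hpack

end Sphere

/-- explicit lower bound for the `N`-point best-packing distance of
the sphere `𝕊^d`. -/
theorem stmt_16 (d : ℕ) (hd : 2 ≤ d) (N : ℕ) (hN : 2 ≤ N) :
    bestPackingDist (sphere (0 : EuclideanSpace ℝ (Fin (d + 1))) 1) N ≥
      ((d : ℝ) / gammaD d) ^ (1 / (d : ℝ)) * (N : ℝ) ^ (-(1 / (d : ℝ))) :=
  stmt_16_general hd finrank_euclideanSpace_fin hN
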